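/- Suppose u, v ∈ B = ℂ[x,y] generate B as a ℂ-algebra. Let s, p, k ≥ 1 be integers, let g be a univariate polynomial over ℂ of degree at most k−1 with g(0) = 1, set F = u·vᵏ + g(v), and suppose P ∈ B satisfies vᵏ·P = (v + Fˢ)ᵖ − F^{sp+1}. If all coefficients of P are real (so P ∈ A = ℝ[x,y]), then some unit of the quotient ring A/PA is not the residue class of a real constant (i.e., (A/PA)* ≠ ℝ*). -/

import Mathlib

/-!
Write `B = ℂ[u, v]`, let `τ` be coefficientwise complex conjugation on `B = ℂ[x, y]`, and let
`u' = τ u`, `v' = τ v`, `F' = τ F`; as `P` is real, `τ P = P`.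

*The unit.* Since `g(0) = 1`, `F` is coprime to `v`, and `v ^ k * P ≡ v ^ p` modulo `F`, so `F` is a
unit modulo `P` (`isCoprime_F_P`). The norm `F * F'` is fixed by `τ`, hence real, and so is the norm
of an inverse of `F` modulo `P`; thus `F * F'` defines a unit of `A/PA`. It remains to see that
`F * F' ≡ D` modulo `P` is impossible for a constant `D`.

*Conjugation is affine in `v'`.* For any `x, y` of positive degrees `d₁, d₂` satisfying the
defining relations of `u, v` (with the same `P`), `deg P = (sp + 1) d₁ + ksp d₂` (`deg_P`).
Measuring degrees in `ℂ[u, v]`, this applies both to `(u, v)` and to `(u', v')`, so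
`(sp + 1) deg u' + ksp deg v' = (sp + 1) + ksp`, and hence `v' = a u + b v + c` with constant
`a, b, c`.

*Contradiction on the curve.* The curve `P = 0` contains the points with
`v = t ^ (sp) (t - 1)`, `u = (t ^ p - g(v)) / v ^ k` for `t ≠ 0, 1`, and there `F = t ^ p`. If
`F * F' = D` on the curve then `F' = D t ^ (-p)`, and `(v' + F' ^ s) ^ p = F' ^ (sp + 1)` becomes a
polynomial identity in `t` (`no_const`). Comparing orders of vanishing at `t = 0` shows that this
identity can hold only if `s = p = 1`, `k = 2`, a case excluded by direct inspection (`key_poly`).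
-/

namespace GoodAsymptote

/-! ### The polynomial identity in the parameter -/

section

open Polynomial

theorem order_eq (i j : ℕ) (A B : ℂ[X]) (hA : A.eval 0 ≠ 0) (hB : B.eval 0 ≠ 0)
    (h : X ^ i * A = X ^ j * B) : i = j := by
  wlog hij : i ≤ j generalizing i j A B
  · exact (this j i B A hB hA h.symm (by omega)).symm
  obtain ⟨d, rfl⟩ := Nat.exists_eq_add_of_le hij
  rw [pow_add, mul_assoc] at h
  have h2 := mul_left_cancel₀ (pow_ne_zero i X_ne_zero) h
  rcases Nat.eq_zero_or_pos d with rfl | hd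
  · rfl
  · exfalso; apply hA; rw [h2]; simp [hd.ne']

/-- `F * F' = D ≠ 0` on the curve `P = 0`, together with `v' = a u + b v + c`, translates into the
identity `h` in the parameter `X = t`, where `V` parametrizes `v`. Extracting a `p`-th root of `h`
gives `V ^ k` times a constant `γ` on the right. At `X = 0`, the case `a = 0` then forces `γ = 0`, and
the case `a ≠ 0` forces `sp + 1 = spk`, i.e. `s = p = 1`, `k = 2`. -/
theorem key_poly (s p k : ℕ) (hs : 1 ≤ s) (hp : 1 ≤ p) (hk : 1 ≤ k)
    (g : ℂ[X]) (hgdeg : g.natDegree ≤ k - 1) (hg0 : g.eval 0 = 1)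
    (a b c D : ℂ) (hD : D ≠ 0) (V : ℂ[X]) (hV : V = X ^ (s * p) * (X - 1))
    (h : (X ^ (s * p + 1) * (C a * (X ^ p - g.comp V) + C b * V ^ (k + 1) + C c * V ^ k)
      + C (D ^ s) * X * V ^ k) ^ p = C (D ^ (s * p + 1)) * (V ^ k) ^ p) : False := by
  have hm : 1 ≤ s * p := Nat.mul_pos hs hp
  have hX1 : (X - 1 : ℂ[X]) ≠ 0 := X_sub_C_ne_zero 1
  have hV0 : V ≠ 0 := by rw [hV]; exact mul_ne_zero (pow_ne_zero _ X_ne_zero) hX1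
  have hVe : V.eval 0 = 0 := by rw [hV]; simp [show s ≠ 0 by omega, show p ≠ 0 by omega]
  obtain ⟨γ, hγ, hI⟩ : ∃ γ : ℂ, γ ≠ 0 ∧
      X ^ (s * p + 1) * (C a * (X ^ p - g.comp V) + C b * V ^ (k + 1) + C c * V ^ k)
      + C (D ^ s) * X * V ^ k = C γ * V ^ k := by
    obtain ⟨δ, hδ⟩ := IsAlgClosed.exists_pow_nat_eq (D ^ (s * p + 1)) hp
    have hδ0 : δ ≠ 0 := by
      rintro rfl
      rw [zero_pow (by omega)] at hδ
      exact pow_ne_zero _ hD hδ.symm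
    rw [← hδ, C_pow (a := δ), ← mul_pow] at h
    have h1 := (UniqueFactorizationMonoid.pow_dvd_pow_iff_dvd (by omega : p ≠ 0)).1 (dvd_of_eq h)
    have h2 := (UniqueFactorizationMonoid.pow_dvd_pow_iff_dvd (by omega : p ≠ 0)).1 (dvd_of_eq h.symm)
    obtain ⟨w, hw⟩ := associated_of_dvd_dvd h2 h1
    obtain ⟨r, hr, hr'⟩ := Polynomial.isUnit_iff.1 w.isUnit
    refine ⟨δ * r, mul_ne_zero hδ0 hr.ne_zero, ?_⟩
    rw [← hw, ← hr', C_mul]; ring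
  have hE : X ^ (s * p + 1) * (C a * (X ^ p - g.comp V)) =
      V ^ k * (C γ - C (D ^ s) * X - X ^ (s * p + 1) * (C b * V + C c)) := by
    linear_combination hI
  by_cases ha : a = 0
  · have : V ^ k * (C γ - C (D ^ s) * X - X ^ (s * p + 1) * (C b * V + C c)) = 0 := by
      rw [← hE, ha]; simp
    have := (mul_eq_zero.1 this).resolve_left (pow_ne_zero _ hV0)
    have := congrArg (eval 0) this
    simp at this
    exact hγ this
  have hord : s * p + 1 = s * p * k := by
    apply order_eq (s * p + 1) (s * p * k) (C a * (X ^ p - g.comp V))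
      ((X - 1) ^ k * (C γ - C (D ^ s) * X - X ^ (s * p + 1) * (C b * V + C c)))
    · simp [hVe, hg0, ha, show p ≠ 0 by omega]
    · simp [hγ]
    · have hVk : V ^ k = X ^ (s * p * k) * (X - 1) ^ k := by rw [hV, mul_pow, ← pow_mul]
      rw [hE, hVk, mul_assoc]
  -- only the case `s = p = 1`, `k = 2` is left, where `g` is linear
  have hsp : s * p = 1 := by
    have : s * p ∣ 1 := (Nat.dvd_add_right (dvd_refl (s * p))).1 (hord ▸ dvd_mul_right _ _)
    exact Nat.dvd_one.1 this
  obtain ⟨rfl, rfl⟩ : s = 1 ∧ p = 1 := by simpa using hsp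
  obtain rfl : k = 2 := by omega
  obtain ⟨α, hα⟩ : ∃ α, g = C α * X + C 1 := by
    refine ⟨g.coeff 1, ?_⟩
    rw [← hg0, ← coeff_zero_eq_eval_zero]
    exact eq_X_add_C_of_natDegree_le_one hgdeg
  subst hα
  have hE2 : C a * (1 - C α * X) =
      (X - 1) * (C γ - C (D ^ 1) * X - X ^ 2 * (C b * V + C c)) := by
    apply mul_left_cancel₀ (mul_ne_zero (pow_ne_zero 2 (X_ne_zero (R := ℂ))) hX1)
    simp only [add_comp, mul_comp, C_comp, X_comp, C_1, one_comp] at hE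
    have hV' : V = X * (X - 1) := by simpa using hV
    rw [hV'] at hE ⊢
    linear_combination hE
  have hα1 : α = 1 := by
    have := congrArg (eval 1) hE2
    simp [ha] at this
    linear_combination -this
  subst hα1
  have hE3 : - C a = C γ - C (D ^ 1) * X - X ^ 2 * (C b * V + C c) := by
    apply mul_left_cancel₀ hX1
    rw [← hE2, C_1]; ring
  -- the coefficient of `X` on the right is `-D`, while the left side is constant
  have := congrArg (fun q => (derivative q).eval 0) hE3
  simp at this
  exact hD this

end

end GoodAsymptote

open MvPolynomial

namespace GoodAsymptote

/-! ### Degrees and coordinates in `ℂ[u, v]` -/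

theorem totalDegree_pow_eq (F : MvPolynomial (Fin 2) ℂ) (hF : F ≠ 0) (n : ℕ) :
    (F ^ n).totalDegree = n * F.totalDegree := by
  induction n with
  | zero => simp
  | succ n ih => rw [pow_succ, totalDegree_mul_of_isDomain (pow_ne_zero _ hF) hF, ih]; ring

/-- The summand `x * y ^ k` dominates `F`, and `F ^ (sp + 1)` dominates `y ^ k * P`, whatever the
positive degrees of `x` and `y`; no cancellation of leading forms occurs. -/
theorem deg_P (s p k : ℕ) (hs : 1 ≤ s) (hk : 1 ≤ k)
    (g : Polynomial ℂ) (hgdeg : g.natDegree ≤ k - 1) (x y F P : MvPolynomial (Fin 2) ℂ)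
    (hx : 1 ≤ x.totalDegree) (hy : 1 ≤ y.totalDegree)
    (hF : F = x * y ^ k + Polynomial.aeval y g)
    (hP : y ^ k * P = (y + F ^ s) ^ p - F ^ (s * p + 1)) :
    P.totalDegree = (s * p + 1) * x.totalDegree + k * (s * p) * y.totalDegree := by
  have hx0 : x ≠ 0 := by rintro rfl; simp at hx
  have hy0 : y ≠ 0 := by rintro rfl; simp at hy
  have h1 : (x * y ^ k).totalDegree = x.totalDegree + k * y.totalDegree := by
    rw [totalDegree_mul_of_isDomain hx0 (pow_ne_zero _ hy0), totalDegree_pow_eq _ hy0]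
  have h2 : (Polynomial.aeval y g).totalDegree ≤ (k - 1) * y.totalDegree := by
    rw [Polynomial.aeval_eq_sum_range]
    refine totalDegree_finsetSum_le fun i hi => ?_
    refine (totalDegree_smul_le _ _).trans ((totalDegree_pow _ _).trans ?_)
    exact Nat.mul_le_mul_right _ (by have := Finset.mem_range.1 hi; omega)
  have hfd : F.totalDegree = x.totalDegree + k * y.totalDegree := by
    rw [hF, totalDegree_add_eq_left_of_totalDegree_lt, h1]
    rw [h1]
    have : (k - 1) * y.totalDegree ≤ k * y.totalDegree := Nat.mul_le_mul_right _ (by omega)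
    omega
  have hyf : y.totalDegree < F.totalDegree := by nlinarith
  have hF0 : F ≠ 0 := by rintro rfl; simp at hyf
  have h3 : (y + F ^ s).totalDegree = s * F.totalDegree := by
    rw [totalDegree_add_eq_right_of_totalDegree_lt, totalDegree_pow_eq _ hF0]
    rw [totalDegree_pow_eq _ hF0]; nlinarith
  have h30 : y + F ^ s ≠ 0 := by
    intro h; rw [h] at h3; simp at h3; rcases h3 with h3 | h3 <;> omega
  have h4 : (y ^ k * P).totalDegree = (s * p + 1) * F.totalDegree := by
    rw [hP, sub_eq_add_neg, totalDegree_add_eq_right_of_totalDegree_lt, totalDegree_neg,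
      totalDegree_pow_eq _ hF0]
    rw [totalDegree_neg, totalDegree_pow_eq _ hF0, totalDegree_pow_eq _ h30, h3]
    nlinarith
  have hP0 : P ≠ 0 := by
    rintro rfl
    rw [mul_zero, totalDegree_zero] at h4
    have : 0 < (s * p + 1) * F.totalDegree := Nat.mul_pos (by omega) (by omega)
    omega
  rw [totalDegree_mul_of_isDomain (pow_ne_zero _ hy0) hP0, totalDegree_pow_eq _ hy0, hfd] at h4
  linarith

theorem affine_of_totalDegree_le_one (q : MvPolynomial (Fin 2) ℂ) (hq : q.totalDegree ≤ 1) :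
    ∃ a b c : ℂ, q = C a * X 0 + C b * X 1 + C c := by
  refine ⟨q.coeff (Finsupp.single 0 1), q.coeff (Finsupp.single 1 1), q.coeff 0, ?_⟩
  ext m
  simp only [coeff_add, coeff_C_mul, coeff_X, coeff_C]
  have h01 : (Finsupp.single (0 : Fin 2) 1 : Fin 2 →₀ ℕ) ≠ Finsupp.single 1 1 := by
    intro h; simpa using DFunLike.congr_fun h 0
  by_cases hm0 : m = 0
  · subst hm0; simp
  by_cases hm1 : m = Finsupp.single 0 1
  · subst hm1; simp [h01.symm, Ne.symm hm0]
  by_cases hm2 : m = Finsupp.single 1 1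
  · subst hm2; simp [h01, Ne.symm hm0]
  rw [if_neg (Ne.symm hm0), if_neg (Ne.symm hm1), if_neg (Ne.symm hm2)]
  simp only [mul_zero, add_zero]
  by_contra hne
  have := (le_totalDegree (mem_support_iff.2 hne)).trans hq
  rw [Finsupp.sum_fintype _ _ (fun _ => rfl), Fin.sum_univ_two] at this
  obtain h | h | h : (m 0 = 0 ∧ m 1 = 0) ∨ (m 0 = 1 ∧ m 1 = 0) ∨ (m 0 = 0 ∧ m 1 = 1) := by omega
  · exact hm0 (by ext i; fin_cases i <;> simp [h])
  · exact hm1 (by ext i; fin_cases i <;> simp [h])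
  · exact hm2 (by ext i; fin_cases i <;> simp [h])

/-- Surjective endomorphisms of Noetherian rings are injective: the chain of kernels of the iterates
is stationary. -/
theorem injective_of_surjective_ringEnd {R : Type*} [CommRing R] [IsNoetherianRing R]
    (φ : R →+* R) (hs : Function.Surjective φ) : Function.Injective φ := by
  let K : ℕ →o Ideal R := ⟨fun n => RingHom.ker (φ ^ n), monotone_nat_of_le_succ fun n x hx => by
    rw [RingHom.mem_ker] at hx ⊢
    rw [pow_succ', RingHom.mul_def, RingHom.comp_apply, hx, map_zero]⟩
  obtain ⟨n, hn⟩ := monotone_stabilizes_iff_noetherian.2 ‹IsNoetherianRing R› K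
  rw [injective_iff_map_eq_zero]
  intro x hx
  obtain ⟨y, rfl⟩ : ∃ y, (φ ^ n) y = x := by
    rw [RingHom.coe_pow]; exact hs.iterate n x
  have hy : y ∈ K (n + 1) := by
    change y ∈ RingHom.ker (φ ^ (n + 1))
    rwa [RingHom.mem_ker, pow_succ', RingHom.mul_def, RingHom.comp_apply]
  rw [← hn (n + 1) (by omega)] at hy
  exact hy

theorem exists_algEquiv (u v : MvPolynomial (Fin 2) ℂ)
    (huv : Algebra.adjoin ℂ {u, v} = ⊤) :
    ∃ e : MvPolynomial (Fin 2) ℂ ≃ₐ[ℂ] MvPolynomial (Fin 2) ℂ, e (X 0) = u ∧ e (X 1) = v := by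
  let φ : MvPolynomial (Fin 2) ℂ →ₐ[ℂ] MvPolynomial (Fin 2) ℂ := aeval ![u, v]
  have hs : Function.Surjective φ := by
    rw [← AlgHom.range_eq_top, ← Algebra.adjoin_range_eq_range_aeval, ← huv,
      Matrix.range_cons, Matrix.range_cons, Matrix.range_empty, Set.union_empty,
      Set.singleton_union]
  have hi : Function.Injective φ := injective_of_surjective_ringEnd φ.toRingHom hs
  exact ⟨AlgEquiv.ofBijective φ ⟨hi, hs⟩, by simp [φ], by simp [φ]⟩

/-! ### The unit `F` modulo `P`, and the curve `P = 0` -/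

theorem isCoprime_F_P {R : Type*} [CommRing R] [Algebra ℂ R] (s p k : ℕ)
    (hs : 1 ≤ s) (hk : 1 ≤ k) (g : Polynomial ℂ) (hg0 : g.eval 0 = 1) (x y F P : R)
    (hF : F = x * y ^ k + Polynomial.aeval y g)
    (hP : y ^ k * P = (y + F ^ s) ^ p - F ^ (s * p + 1)) : IsCoprime F P := by
  have hFy : IsCoprime F y := by
    obtain ⟨h, hh⟩ : (Polynomial.X : Polynomial ℂ) ∣ g - 1 := by
      rw [Polynomial.X_dvd_iff, Polynomial.coeff_zero_eq_eval_zero]; simp [hg0]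
    obtain ⟨j, rfl⟩ := Nat.exists_eq_add_of_le' hk
    have h1 := congrArg (Polynomial.aeval y) hh
    simp only [map_sub, map_one, map_mul, Polynomial.aeval_X] at h1
    refine ⟨1, -(x * y ^ j + Polynomial.aeval y h), ?_⟩
    rw [hF]
    linear_combination h1
  obtain ⟨i, rfl⟩ := Nat.exists_eq_add_of_le' hs
  obtain ⟨d, hd⟩ : F ∣ (y + F ^ (i + 1)) ^ p - y ^ p :=
    ((Dvd.intro _ (pow_succ' F i).symm).trans (by simp)).trans
      (sub_dvd_pow_sub_pow (y + F ^ (i + 1)) y p)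
  have h2 : y ^ k * P = y ^ p + F * (d - F ^ ((i + 1) * p)) := by
    rw [hP]; linear_combination hd
  refine IsCoprime.of_mul_right_right (y := y ^ k) ?_
  rw [h2]
  exact (hFy.pow_right).add_mul_left_right _

/-- In the coordinates `u = X 0`, `v = X 1`: if `y` (the conjugate of `v`) is affine and satisfies the
same relation with `P` as `v` does, then `F * F'` cannot be a constant `D` modulo `P`. -/
theorem no_const (s p k : ℕ) (hs : 1 ≤ s) (hp : 1 ≤ p) (hk : 1 ≤ k)
    (g : Polynomial ℂ) (hgdeg : g.natDegree ≤ k - 1) (hg0 : g.eval 0 = 1)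
    (F F' P Q : MvPolynomial (Fin 2) ℂ) (a b c D : ℂ)
    (hF : F = X 0 * X 1 ^ k + Polynomial.aeval (X 1) g)
    (hP : X 1 ^ k * P = (X 1 + F ^ s) ^ p - F ^ (s * p + 1))
    (y : MvPolynomial (Fin 2) ℂ) (hy : y = C a * X 0 + C b * X 1 + C c)
    (hP' : y ^ k * P = (y + F' ^ s) ^ p - F' ^ (s * p + 1))
    (hcop : IsCoprime (F * F') P) (hQ : F * F' - C D = P * Q) : False := by
  -- the parametrization of the curve `P = 0`
  have key : ∀ t : ℂ, t ≠ 0 → t ≠ 1 → ∀ v₀ u₀ : ℂ, v₀ = t ^ (s * p) * (t - 1) →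
      u₀ * v₀ ^ k = t ^ p - g.eval v₀ → ∃ F₀ : ℂ, D ≠ 0 ∧ t ^ p * F₀ = D ∧
        (a * u₀ + b * v₀ + c + F₀ ^ s) ^ p = F₀ ^ (s * p + 1) := by
    intro t ht ht1 v₀ u₀ hv₀ hu₀
    have hv0 : v₀ ≠ 0 := by
      rw [hv₀]; exact mul_ne_zero (pow_ne_zero _ ht) (sub_ne_zero.2 ht1)
    have hFt : eval ![u₀, v₀] F = t ^ p := by
      have : eval ![u₀, v₀] (Polynomial.aeval (X 1 : MvPolynomial (Fin 2) ℂ) g) = g.eval v₀ := by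
        rw [Polynomial.aeval_def, Polynomial.hom_eval₂, Polynomial.eval]
        congr 1
        · ext; simp
        · simp
      rw [hF, map_add, this]
      simp [hu₀]
    have hPt : eval ![u₀, v₀] P = 0 := by
      have := congrArg (eval ![u₀, v₀]) hP
      simp only [map_mul, map_pow, map_sub, map_add, eval_X, hFt] at this
      simp only [Matrix.cons_val_one, Matrix.cons_val_zero] at this
      have h0 : v₀ ^ k * eval ![u₀, v₀] P = 0 := by
        rw [this, hv₀]; ring
      exact (mul_eq_zero.1 h0).resolve_left (pow_ne_zero _ hv0)
    refine ⟨eval ![u₀, v₀] F', ?_, ?_, ?_⟩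
    · rintro rfl
      obtain ⟨α, β, h⟩ := hcop
      have h1 := congrArg (eval ![u₀, v₀]) h
      have h2 := congrArg (eval ![u₀, v₀]) hQ
      simp only [map_mul, map_add, map_one, map_sub, hPt, eval_C] at h1 h2
      simp at h1 h2
      rcases h2 with h2 | h2 <;> simp [h2] at h1
    · have h2 := congrArg (eval ![u₀, v₀]) hQ
      simp only [map_mul, map_sub, hPt, eval_C, hFt] at h2
      linear_combination h2
    · have h2 := congrArg (eval ![u₀, v₀]) hP'
      simp only [map_mul, map_sub, map_add, map_pow, hPt, hy, eval_C, eval_X] at h2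
      simp only [Matrix.cons_val_one, Matrix.cons_val_zero] at h2
      linear_combination -h2
  -- `t = 2` is an arbitrary admissible parameter: the curve has a point, where `F * F' ≠ 0`
  have hD : D ≠ 0 := by
    obtain ⟨F₀, h, -⟩ := key 2 (by norm_num) (by norm_num) _
      (((2 : ℂ) ^ p - g.eval (2 ^ (s * p) * (2 - 1))) / (2 ^ (s * p) * (2 - 1)) ^ k) rfl
      (div_mul_cancel₀ _ (by norm_num))
    exact h
  refine key_poly s p k hs hp hk g hgdeg hg0 a b c D hD _ rfl ?_
  refine Polynomial.eq_of_infinite_eval_eq _ _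
    (((Set.toFinite {0, 1}).infinite_compl (α := ℂ)).mono fun t ht => ?_)
  simp only [Set.mem_compl_iff, Set.mem_insert_iff, Set.mem_singleton_iff, not_or] at ht
  have hv0 : t ^ (s * p) * (t - 1) ≠ 0 :=
    mul_ne_zero (pow_ne_zero _ ht.1) (sub_ne_zero.2 ht.2)
  have hu := div_mul_cancel₀ (t ^ p - g.eval (t ^ (s * p) * (t - 1))) (pow_ne_zero k hv0)
  obtain ⟨F₀, -, h1, h2⟩ := key t ht.1 ht.2 _ _ rfl hu
  simp only [Set.mem_ofPred_eq, Polynomial.eval_mul, Polynomial.eval_add, Polynomial.eval_sub,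
    Polynomial.eval_pow, Polynomial.eval_X, Polynomial.eval_C, Polynomial.eval_comp,
    Polynomial.eval_one]
  generalize (t ^ p - g.eval (t ^ (s * p) * (t - 1))) / (t ^ (s * p) * (t - 1)) ^ k = u₀ at hu h2
  rw [← hu, ← h1]
  generalize t ^ (s * p) * (t - 1) = v₀ at h2
  calc _ = (v₀ ^ k) ^ p * (t ^ (s * p + 1)) ^ p * (a * u₀ + b * v₀ + c + F₀ ^ s) ^ p := by
        rw [← mul_pow, ← mul_pow]; congr 1; ring
    _ = _ := by rw [h2]; ring

/-! ### Complex conjugation on `ℂ[x, y]` -/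

theorem exists_real_of_fixed (q : MvPolynomial (Fin 2) ℂ)
    (hq : map (starRingEnd ℂ) q = q) :
    ∃ q₀ : MvPolynomial (Fin 2) ℝ, map (algebraMap ℝ ℂ) q₀ = q := by
  refine mem_range_map_iff_coeffs_subset.2 fun z hz => ?_
  obtain ⟨m, -, rfl⟩ := mem_coeffs_iff.1 hz
  have h := congrArg (coeff m) hq
  rw [coeff_map] at h
  exact ⟨(coeff m q).re, Complex.conj_eq_iff_re.1 h⟩

theorem conj_conj (q : MvPolynomial (Fin 2) ℂ) :
    map (starRingEnd ℂ) (map (starRingEnd ℂ) q) = q := by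
  rw [map_map]
  have : (starRingEnd ℂ).comp (starRingEnd ℂ) = RingHom.id ℂ := by ext z; simp
  rw [this, map_id]

/-- The conjugate of the coordinate `e (X i)` is not constant, its degree being measured in the
coordinates given by `e`. -/
theorem one_le_totalDegree_conj (e : MvPolynomial (Fin 2) ℂ ≃ₐ[ℂ] MvPolynomial (Fin 2) ℂ)
    (i : Fin 2) : 1 ≤ (e.symm (map (starRingEnd ℂ) (e (X i)))).totalDegree := by
  by_contra h
  have h0 := totalDegree_eq_zero_iff_eq_C.1 (Nat.lt_one_iff.1 (not_le.1 h))
  generalize coeff 0 (e.symm (map (starRingEnd ℂ) (e (X i)))) = z at h0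
  have h1 := congrArg e h0
  rw [AlgEquiv.apply_symm_apply, ← algebraMap_eq, AlgEquiv.commutes, algebraMap_eq] at h1
  have h2 := congrArg (map (starRingEnd ℂ)) h1
  rw [conj_conj, map_C] at h2
  have h3 := congrArg e.symm h2
  rw [AlgEquiv.symm_apply_apply, ← algebraMap_eq, AlgEquiv.commutes, algebraMap_eq] at h3
  have h4 := congrArg totalDegree h3
  simp at h4

theorem conj_aeval (g : Polynomial ℂ) (v : MvPolynomial (Fin 2) ℂ) :
    map (starRingEnd ℂ) (Polynomial.aeval v g) =
      Polynomial.aeval (map (starRingEnd ℂ) v) (g.map (starRingEnd ℂ)) := by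
  rw [Polynomial.aeval_def, Polynomial.hom_eval₂, Polynomial.aeval_def, Polynomial.eval₂_map]
  congr 1
  ext z; simp [algebraMap_eq]

end GoodAsymptote

open GoodAsymptote

/-- Good asymptote, form (ii.1): if `vᵏP = (v + Fˢ)ᵖ − F^{sp+1}` with `F = uvᵏ + g(v)`
and `P` has real coefficients, then `(A/PA)* ≠ ℝ*`. -/
theorem stmt_3 (u v : MvPolynomial (Fin 2) ℂ)
    (huv : Algebra.adjoin ℂ {u, v} = ⊤)
    (s p k : ℕ) (hs : 1 ≤ s) (hp : 1 ≤ p) (hk : 1 ≤ k)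
    (g : Polynomial ℂ) (hgdeg : g.natDegree ≤ k - 1) (hg0 : Polynomial.eval 0 g = 1)
    (F : MvPolynomial (Fin 2) ℂ) (hF : F = u * v ^ k + Polynomial.aeval v g)
    (P : MvPolynomial (Fin 2) ℂ)
    (hP : v ^ k * P = (v + F ^ s) ^ p - F ^ (s * p + 1))
    (P₀ : MvPolynomial (Fin 2) ℝ)
    (hP₀ : MvPolynomial.map (algebraMap ℝ ℂ) P₀ = P) :
    ∃ w : (MvPolynomial (Fin 2) ℝ ⧸ Ideal.span {P₀})ˣ,
      ∀ r : ℝ, (w : MvPolynomial (Fin 2) ℝ ⧸ Ideal.span {P₀}) ≠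
        algebraMap ℝ (MvPolynomial (Fin 2) ℝ ⧸ Ideal.span {P₀}) r := by
  have hinj : Function.Injective (map (σ := Fin 2) (algebraMap ℝ ℂ)) :=
    map_injective _ (algebraMap ℝ ℂ).injective
  let τ : MvPolynomial (Fin 2) ℂ →+* MvPolynomial (Fin 2) ℂ := map (starRingEnd ℂ)
  have hττ : ∀ q, τ (τ q) = q := conj_conj
  have hτP : τ P = P := by
    rw [← hP₀]
    change map _ _ = _
    rw [map_map]
    have hreal : (starRingEnd ℂ).comp (algebraMap ℝ ℂ) = algebraMap ℝ ℂ := by ext z; simp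
    rw [hreal]
  have hFτ : τ F = τ u * τ v ^ k + Polynomial.aeval (τ v) (g.map (starRingEnd ℂ)) := by
    rw [hF, map_add, map_mul, map_pow]
    exact congrArg _ (conj_aeval g v)
  have hPτ : τ v ^ k * P = (τ v + τ F ^ s) ^ p - τ F ^ (s * p + 1) := by
    have := congrArg τ hP
    simpa only [map_mul, map_pow, map_sub, map_add, hτP] using this
  have hcop : IsCoprime F P := isCoprime_F_P s p k hs hk g hg0 u v F P hF hP
  have hcop' : IsCoprime (τ F) P := by
    have := hcop.map τ
    rwa [hτP] at this
  obtain ⟨α, β, hαβ⟩ := hcop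
  have hαβ' : τ α * τ F + τ β * P = 1 := by
    have := congrArg τ hαβ
    simpa only [map_mul, map_add, map_one, hτP] using this
  -- the norm `F * τ F` and the norm of an inverse of `F` modulo `P` are real
  obtain ⟨n, hn⟩ := exists_real_of_fixed (F * τ F) (by
    change τ _ = _
    rw [map_mul, hττ, mul_comm])
  obtain ⟨m, hm⟩ := exists_real_of_fixed (α * τ α) (by
    change τ _ = _
    rw [map_mul, hττ, mul_comm])
  obtain ⟨r, hr⟩ := exists_real_of_fixed (β + τ β - β * τ β * P) (by
    change τ _ = _
    rw [map_sub, map_add, map_mul, map_mul, hττ, hτP]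
    ring)
  have hnm : n * m - 1 = P₀ * -r := by
    apply hinj
    rw [map_sub, map_mul, map_mul, map_neg, map_one, hn, hm, hr, hP₀]
    linear_combination τ α * τ F * hαβ + (1 - β * P) * hαβ'
  have hunit : Ideal.Quotient.mk (Ideal.span {P₀}) n *
      Ideal.Quotient.mk (Ideal.span {P₀}) m = 1 := by
    rw [← map_mul, ← map_one (Ideal.Quotient.mk (Ideal.span {P₀})), Ideal.Quotient.eq,
      Ideal.mem_span_singleton]
    exact ⟨_, hnm⟩
  refine ⟨Units.mkOfMulEqOne _ _ hunit, fun D hD => ?_⟩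
  rw [Units.val_mkOfMulEqOne] at hD
  have hD' : Ideal.Quotient.mk (Ideal.span {P₀}) n =
      Ideal.Quotient.mk (Ideal.span {P₀}) (C D) := hD
  rw [Ideal.Quotient.eq, Ideal.mem_span_singleton] at hD'
  obtain ⟨Q, hQ⟩ := hD'
  have hQ' : F * τ F - C (D : ℂ) = P * map (algebraMap ℝ ℂ) Q := by
    have := congrArg (map (algebraMap ℝ ℂ)) hQ
    rw [map_sub, hn, map_C, map_mul, hP₀] at this
    exact this
  -- pass to the coordinates `u, v`
  obtain ⟨e, rfl, rfl⟩ := exists_algEquiv u v huv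
  have hC : ∀ z : ℂ, e.symm (C z) = C z := fun z => e.symm.commutes z
  have hF1 : e.symm F = X 0 * X 1 ^ k + Polynomial.aeval (X 1) g := by
    rw [hF, map_add, map_mul, map_pow, ← Polynomial.aeval_algHom_apply]
    simp
  have hF2 : e.symm (τ F) = e.symm (τ (e (X 0))) * e.symm (τ (e (X 1))) ^ k +
      Polynomial.aeval (e.symm (τ (e (X 1)))) (g.map (starRingEnd ℂ)) := by
    rw [hFτ, map_add, map_mul, map_pow, ← Polynomial.aeval_algHom_apply]
  have hP1 : X 1 ^ k * e.symm P = (X 1 + e.symm F ^ s) ^ p - e.symm F ^ (s * p + 1) := by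
    have := congrArg e.symm hP
    simpa only [map_mul, map_pow, map_sub, map_add, AlgEquiv.symm_apply_apply] using this
  have hP2 : e.symm (τ (e (X 1))) ^ k * e.symm P =
      (e.symm (τ (e (X 1))) + e.symm (τ F) ^ s) ^ p - e.symm (τ F) ^ (s * p + 1) := by
    have := congrArg e.symm hPτ
    simpa only [map_mul, map_pow, map_sub, map_add] using this
  have hx := one_le_totalDegree_conj e 0
  have hy := one_le_totalDegree_conj e 1
  have d1 := deg_P s p k hs hk g hgdeg _ _ _ _ (by simp) (by simp) hF1 hP1
  have d2 := deg_P s p k hs hk (g.map (starRingEnd ℂ))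
    (Polynomial.natDegree_map_le.trans hgdeg) _ _ _ _ hx hy hF2 hP2
  change 1 ≤ (e.symm (τ (e (X 0)))).totalDegree at hx
  change 1 ≤ (e.symm (τ (e (X 1)))).totalDegree at hy
  change _ = (s * p + 1) * (e.symm (τ (e (X 0)))).totalDegree +
    k * (s * p) * (e.symm (τ (e (X 1)))).totalDegree at d2
  rw [d1, totalDegree_X, totalDegree_X] at d2
  have hy1 : (e.symm (τ (e (X 1)))).totalDegree ≤ 1 := by
    have hpos : 1 ≤ k * (s * p) := Nat.mul_pos hk (Nat.mul_pos hs hp)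
    by_contra hlt
    have h1 := Nat.mul_le_mul_left (s * p + 1) hx
    have h2 := Nat.mul_le_mul_left (k * (s * p)) (Nat.succ_le_of_lt (not_le.1 hlt))
    omega
  obtain ⟨a, b, c, habc⟩ := affine_of_totalDegree_le_one _ hy1
  refine no_const s p k hs hp hk g hgdeg hg0 (e.symm F) (e.symm (τ F)) (e.symm P)
    (e.symm (map (algebraMap ℝ ℂ) Q)) a b c D hF1 hP1 _ habc hP2 ?_ ?_
  · obtain ⟨α', β', h⟩ := IsCoprime.mul_left ⟨α, β, hαβ⟩ hcop'
    refine ⟨e.symm α', e.symm β', ?_⟩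
    rw [← map_mul, ← map_mul, ← map_mul, ← map_add, h, map_one]
  · have := congrArg e.symm hQ'
    simpa only [map_mul, map_sub, hC] using this
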